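/- Let f(13) be the real number defined by f(13) = 2·13⁶ · ∑_h (Γ((13 − ⟨3h⟩)/13) · Γ((13 − ⟨9h⟩)/13) / Γ(⟨3h⟩/13))² · ₃F₂(h/13, h/13, ⟨9h⟩/13; 1, 1; 1), the sum being over h ∈ {1, ..., 12} with h + ⟨3h⟩ + ⟨9h⟩ = 13. Then for every integer k with 1 ≤ k ≤ 5, the real number k! · 13^{4k−4} · f(13) is not an integer. -/

import Mathlib

/-!
Since `k! * 13 ^ (4 k - 4)` divides `5! * 13 ^ 16` for `1 ≤ k ≤ 5`, it suffices to show that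
`5! * 13 ^ 16 * f13` is not an integer. This number is `6559580430989766116014661811.70…`, so `f13`
is needed to a relative precision of about `10 ^ (-29)`; `f13_bounds` establishes it by certified
interval arithmetic on the twelve values `Γ(j / 13)` and six values of `₃F₂`.

*Gamma values.* Integration by parts for the lower incomplete gamma function gives
`Γ(s) ≈ X ^ s * e ^ (-X) * ∑ X ^ k / (s (s + 1) ⋯ (s + k))` with a truncation error of order
`e ^ (-X)`. With `X = (10 / 7) ^ 13` the factor `X ^ (j / 13) = (10 / 7) ^ j` is rational, and the
factor `e ^ (-X)` is eliminated by comparison with `Γ(1) = 1` (`gamma_bounds`).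

*Hypergeometric values.* The terms `t n` satisfy `t (n + 1) / t n = R n` for a rational function
`R`, but decay only polynomially. A truncated asymptotic series `p n` in `1 / n` solving
`p n - R n * p (n + 1) = 1 + O(n ^ (-19))` turns the tail into a telescoping sum, so that
`∑_{i ≥ 100} t i` equals `p 100 * t 100` up to a relative error of `10 ^ (-33)`
(`telescoping_tail`, `F32_bounds`). The error bound for all `n ≥ 100` is a polynomial inequality,
checked by the signs of the coefficients in the variable `n - 100`.

Both kinds of sums are evaluated in Horner form, as backward recurrences in integer fixed-point
arithmetic with directed rounding (`hornerLo_le`, `le_hornerHi`).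
-/

/-- The Pochhammer symbol `(α, n) = Γ(α + n)/Γ(α)`, for a real `α` and natural `n`. -/
noncomputable def poch (a : ℝ) (n : ℕ) : ℝ := Real.Gamma (a + n) / Real.Gamma a

/-- The generalized hypergeometric series ₃F₂(α₁, α₂, α₃; β₁, β₂; x) at x = 1. -/
noncomputable def F32 (a₁ a₂ a₃ b₁ b₂ : ℝ) : ℝ :=
  ∑' n : ℕ, poch a₁ n * poch a₂ n * poch a₃ n / (poch b₁ n * poch b₂ n * poch 1 n)

/-- The value f(13) = f(13,1) of the paper for C₁₃^{1,3}, with m = 3. -/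
noncomputable def f13 : ℝ :=
  2 * 13 ^ 6 *
    ∑ h ∈ (Finset.Icc 1 12).filter (fun h : ℕ => h + (3 * h) % 13 + (9 * h) % 13 = 13),
      (Real.Gamma (((13 - (3 * h) % 13 : ℕ) : ℝ) / 13) *
          Real.Gamma (((13 - (9 * h) % 13 : ℕ) : ℝ) / 13) /
          Real.Gamma ((((3 * h) % 13 : ℕ) : ℝ) / 13)) ^ 2 *
        F32 ((h : ℝ) / 13) ((h : ℝ) / 13) ((((9 * h) % 13 : ℕ) : ℝ) / 13) 1 1

/-! ### Backward recurrences with directed rounding -/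

section Horner

/-- Fixed-point lower bound, in units of `1 / S`, for the solution `v k` of the backward recurrence
`d k * v k = a k + b k * v (k + 1)`, started from the value `v0` at index `k + f` and rounding down
at each of the `f` steps; the last two arguments are `f` and `k`. -/
def hornerLo (S : ℕ) (a b d : ℕ → ℕ) (v0 : ℕ) : ℕ → ℕ → ℕ
  | 0, _ => v0
  | f + 1, k => (a k * S + b k * hornerLo S a b d v0 f (k + 1)) / d k

/-- The counterpart of `hornerLo` that rounds up at each step. -/
def hornerHi (S : ℕ) (a b d : ℕ → ℕ) (v0 : ℕ) : ℕ → ℕ → ℕ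
  | 0, _ => v0
  | f + 1, k => (a k * S + b k * hornerHi S a b d v0 f (k + 1)) / d k + 1

variable {S : ℕ} {a b d : ℕ → ℕ} {v : ℕ → ℝ}

theorem hornerLo_le (hd : ∀ k, 0 < d k)
    (hv : ∀ k, v k * d k = a k + b k * v (k + 1)) (v0 f k : ℕ)
    (h0 : (v0 : ℝ) ≤ S * v (k + f)) : (hornerLo S a b d v0 f k : ℝ) ≤ S * v k := by
  induction f generalizing k with
  | zero => simpa [hornerLo] using h0
  | succ f ih =>
    have h1 := ih (k + 1) (by rwa [show k + 1 + f = k + (f + 1) by ring])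
    have hdk : (0 : ℝ) < d k := by exact_mod_cast hd k
    rw [hornerLo]
    refine Nat.cast_div_le.trans ?_
    rw [div_le_iff₀ hdk]
    push_cast
    calc (a k * S + b k * (hornerLo S a b d v0 f (k + 1)) : ℝ)
        ≤ a k * S + b k * (S * v (k + 1)) := by gcongr
      _ = S * (v k * d k) := by rw [hv]; ring
      _ = _ := by ring

theorem le_hornerHi (hd : ∀ k, 0 < d k)
    (hv : ∀ k, v k * d k = a k + b k * v (k + 1)) (v0 f k : ℕ)
    (h0 : S * v (k + f) ≤ (v0 : ℝ)) : S * v k ≤ (hornerHi S a b d v0 f k : ℝ) := by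
  induction f generalizing k with
  | zero => simpa [hornerHi] using h0
  | succ f ih =>
    have h1 := ih (k + 1) (by rwa [show k + 1 + f = k + (f + 1) by ring])
    have hdk : (0 : ℝ) < d k := by exact_mod_cast hd k
    rw [hornerHi]
    set q := a k * S + b k * hornerHi S a b d v0 f (k + 1) with hq
    have h2 : (q : ℝ) ≤ ((q / d k + 1 : ℕ) : ℝ) * d k := by
      have := Nat.lt_div_mul_add (a := q) (hd k)
      have h3 : q ≤ (q / d k + 1) * d k := by rw [add_mul, one_mul]; exact this.le
      exact_mod_cast h3
    refine le_of_mul_le_mul_right ?_ hdk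
    refine le_trans ?_ h2
    rw [hq]
    push_cast
    calc S * v k * d k = S * (v k * d k) := by ring
      _ = a k * S + b k * (S * v (k + 1)) := by rw [hv]; ring
      _ ≤ a k * S + b k * (hornerHi S a b d v0 f (k + 1)) := by gcongr

end Horner

/-! ### Bounds for the Gamma function -/

open MeasureTheory Set in
/-- The lower incomplete gamma function `γ(s, X)`. -/
noncomputable def lowerGamma (s X : ℝ) : ℝ := ∫ t in Ioc 0 X, Real.exp (-t) * t ^ (s - 1)

section Gamma
open MeasureTheory Set

theorem lowerGamma_integrable {s : ℝ} (hs : 0 < s) (X : ℝ) :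
    IntegrableOn (fun t : ℝ => Real.exp (-t) * t ^ (s - 1)) (Ioc 0 X) :=
  (Real.GammaIntegral_convergent hs).mono_set Ioc_subset_Ioi_self

theorem lowerGamma_add_one {s X : ℝ} (hs : 0 < s) (hX : 0 < X) :
    lowerGamma (s + 1) X = s * lowerGamma s X - X ^ s * Real.exp (-X) := by
  have h1 := lowerGamma_integrable hs X
  have h2 := lowerGamma_integrable (s := s + 1) (by linarith) X
  have key := intervalIntegral.integral_eq_sub_of_hasDerivAt_of_le hX.le
    (f := fun t : ℝ => Real.exp (-t) * t ^ s)
    (f' := fun t : ℝ => s * (Real.exp (-t) * t ^ (s - 1)) - Real.exp (-t) * t ^ (s + 1 - 1))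
    (by
      refine ContinuousOn.mul (by fun_prop) ?_
      exact fun x _ => (Real.continuousAt_rpow_const _ _ (Or.inr hs.le)).continuousWithinAt)
    (by
      intro x hx
      have e1 : HasDerivAt (fun t : ℝ => Real.exp (-t)) (-Real.exp (-x)) x := by
        simpa using (hasDerivAt_neg x).exp
      have e2 := Real.hasDerivAt_rpow_const (x := x) (p := s) (Or.inl hx.1.ne')
      refine (e1.mul e2).congr_deriv ?_
      rw [add_sub_cancel_right]
      ring)
    (by
      rw [intervalIntegrable_iff_integrableOn_Ioc_of_le hX.le]
      exact (h1.const_mul s).sub h2)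
  rw [intervalIntegral.integral_of_le hX.le, integral_sub (h1.const_mul s) h2,
    integral_const_mul] at key
  simp only [Real.zero_rpow hs.ne', mul_zero, sub_zero] at key
  unfold lowerGamma
  linarith

theorem lowerGamma_nonneg (s X : ℝ) : 0 ≤ lowerGamma s X := by
  refine setIntegral_nonneg measurableSet_Ioc fun t ht => ?_
  have := ht.1.le
  positivity

theorem lowerGamma_le {s X : ℝ} (hs : 1 ≤ s) (hX : 0 < X) : lowerGamma s X ≤ X ^ s := by
  have h : lowerGamma s X ≤ ∫ _ in Ioc 0 X, X ^ (s - 1) := by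
    refine setIntegral_mono_on (lowerGamma_integrable (by linarith) X) (by simp)
      measurableSet_Ioc fun t ht => ?_
    calc Real.exp (-t) * t ^ (s - 1) ≤ 1 * X ^ (s - 1) := by
          have h0 := ht.1.le
          have h1 : Real.exp (-t) ≤ 1 := Real.exp_le_one_iff.mpr (by linarith)
          have h2 := Real.rpow_le_rpow h0 ht.2 (show 0 ≤ s - 1 by linarith)
          exact mul_le_mul h1 h2 (by positivity) zero_le_one
      _ = _ := one_mul _
  refine h.trans (le_of_eq ?_)
  rw [setIntegral_const]
  simp only [Measure.real, Real.volume_Ioc, sub_zero, ENNReal.toReal_ofReal hX.le, smul_eq_mul]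
  rw [Real.rpow_sub_one hX.ne']
  field_simp

theorem lowerGamma_le_Gamma {s X : ℝ} (hs : 0 < s) :
    lowerGamma s X ≤ Real.Gamma s := by
  rw [Real.Gamma_eq_integral hs]
  refine setIntegral_mono_set (Real.GammaIntegral_convergent hs) ?_
    (Ioc_subset_Ioi_self.eventuallyLE)
  filter_upwards [ae_restrict_mem measurableSet_Ioi] with t ht
  have : (0 : ℝ) ≤ t := le_of_lt ht
  simp only [Pi.zero_apply]
  positivity

theorem Gamma_le_lowerGamma_add {s X : ℝ} (hs : 0 < s) (hs1 : s ≤ 1) (hX : 1 ≤ X) :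
    Real.Gamma s ≤ lowerGamma s X + Real.exp (-X) := by
  have hX0 : 0 < X := by linarith
  have hi := Real.GammaIntegral_convergent hs
  rw [Real.Gamma_eq_integral hs, ← Ioc_union_Ioi_eq_Ioi hX0.le,
    setIntegral_union (Ioc_disjoint_Ioi le_rfl) measurableSet_Ioi
      (hi.mono_set Ioc_subset_Ioi_self) (hi.mono_set (Ioi_subset_Ioi hX0.le))]
  unfold lowerGamma
  gcongr
  rw [← integral_exp_neg_Ioi X]
  refine setIntegral_mono_on (hi.mono_set (Ioi_subset_Ioi hX0.le)) (integrableOn_exp_neg_Ioi X)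
    measurableSet_Ioi fun t ht => ?_
  have h1 : (1 : ℝ) ≤ t := hX.trans (le_of_lt ht)
  have := Real.rpow_le_one_of_one_le_of_nonpos h1 (show s - 1 ≤ 0 by linarith)
  exact mul_le_of_le_one_right (Real.exp_pos _).le this

/-- Fixed-point unit for all recurrences: values are integer multiples of `10 ^ (-40)`. -/
def fpUnit : ℕ := 10 ^ 40

/-- Lower bound, in units of `1 / fpUnit`, for `e ^ X * X ^ (-s) * Γ(s)` at `s = j / 13`,
`X = (10 / 7) ^ 13`, from 500 terms of the series for the lower incomplete gamma function. -/
def gammaLo (j : ℕ) : ℕ :=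
  hornerLo fpUnit (fun _ => 13 * 7 ^ 13) (fun _ => 13 * 10 ^ 13) (fun k => 7 ^ 13 * (j + 13 * k))
    0 500 0

/-- Upper counterpart of `gammaLo`. The start value uses `e ^ X ≤ 3 ^ 104`, and the summand
`fpUnit` accounts for the integral over `(X, ∞)`. -/
def gammaHi (j : ℕ) : ℕ :=
  hornerHi fpUnit (fun _ => 13 * 7 ^ 13) (fun _ => 13 * 10 ^ 13) (fun k => 7 ^ 13 * (j + 13 * k))
    (fpUnit * 3 ^ 104) 500 0 + fpUnit

/-- The scaled value `e ^ X * X ^ (-s) * Γ(s)` at `s = j / 13`, `X = (10 / 7) ^ 13`, lies in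
`[gammaLo j, gammaHi j] / fpUnit`; the choice of `X` makes `X ^ s = (10 / 7) ^ j` rational. -/
theorem scaledGamma_bounds (j : ℕ) (hj : 0 < j) (hj' : j ≤ 13) :
    (gammaLo j : ℝ) * (10 / 7) ^ j ≤ fpUnit * (Real.exp ((10 / 7) ^ 13) * Real.Gamma ((j : ℝ) / 13)) ∧
    fpUnit * (Real.exp ((10 / 7) ^ 13) * Real.Gamma ((j : ℝ) / 13)) ≤ gammaHi j * (10 / 7) ^ j := by
  set X : ℝ := (10 / 7) ^ 13 with hX
  have hX1 : 1 ≤ X := by rw [hX]; norm_num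
  have hX0 : 0 < X := by linarith
  set s : ℝ := (j : ℝ) / 13 with hs
  have hs0 : 0 < s := by positivity
  have hs1 : s ≤ 1 := by
    rw [hs, div_le_one (by norm_num)]; exact_mod_cast hj'
  have hXs : X ^ s = (10 / 7) ^ j := by
    rw [hX, hs, ← Real.rpow_natCast, ← Real.rpow_mul (by norm_num), ← Real.rpow_natCast]
    congr 1
    push_cast
    ring
  let v : ℕ → ℝ := fun k => Real.exp X * lowerGamma (s + k) X / X ^ (s + k)
  have hd : ∀ k, 0 < 7 ^ 13 * (j + 13 * k) := fun k => by positivity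
  have hv : ∀ k, v k * ((7 ^ 13 * (j + 13 * k) : ℕ) : ℝ) =
      ((13 * 7 ^ 13 : ℕ) : ℝ) + ((13 * 10 ^ 13 : ℕ) : ℝ) * v (k + 1) := by
    intro k
    have h := lowerGamma_add_one (s := s + k) (X := X) (by positivity) hX0
    have e : s + ((k + 1 : ℕ) : ℝ) = s + k + 1 := by push_cast; ring
    have hp : 0 < X ^ (s + k) := by positivity
    have hj13 : (j : ℝ) = 13 * s := by rw [hs]; ring
    simp only [v]
    rw [e, h, Real.rpow_add_one hX0.ne', Real.exp_neg]
    rw [show ((13 * 10 ^ 13 : ℕ) : ℝ) = 13 * (X * 7 ^ 13) by rw [hX]; norm_num]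
    push_cast
    rw [hj13]
    field_simp
    ring
  have hexp : Real.exp X ≤ 3 ^ 104 := by
    calc Real.exp X ≤ Real.exp (104 : ℕ) := Real.exp_le_exp.mpr (by rw [hX]; norm_num)
      _ = Real.exp 1 ^ 104 := by rw [← Real.exp_nat_mul]; simp
      _ ≤ 3 ^ 104 := by
        gcongr
        linarith [Real.exp_one_lt_d9]
  have hlo := hornerLo_le (S := fpUnit) hd hv 0 500 0 (by
    have := lowerGamma_nonneg (s + (0 + 500 : ℕ)) X
    simp only [v, Nat.cast_zero]
    positivity)
  have hhi := le_hornerHi (S := fpUnit) hd hv (fpUnit * 3 ^ 104) 500 0 (by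
    have h := lowerGamma_le (s := s + (0 + 500 : ℕ)) (X := X) (by push_cast; linarith) hX0
    have h2 : v (0 + 500) ≤ 3 ^ 104 := by
      have h3 := lowerGamma_nonneg (s + (0 + 500 : ℕ)) X
      simp only [v]
      rw [div_le_iff₀ (by positivity)]
      exact mul_le_mul hexp h h3 (by positivity)
    rw [Nat.cast_mul]
    refine mul_le_mul_of_nonneg_left (h2.trans_eq ?_) (by positivity)
    norm_num)
  have hv0 : v 0 * (10 / 7) ^ j = Real.exp X * lowerGamma s X := by
    simp only [v, Nat.cast_zero, add_zero]
    rw [hXs]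
    field_simp
  have hu : (0 : ℝ) < fpUnit := by norm_num [fpUnit]
  have hp : (0 : ℝ) < (10 / 7) ^ j := by positivity
  constructor
  · calc (gammaLo j : ℝ) * (10 / 7) ^ j ≤ (fpUnit * v 0) * (10 / 7) ^ j := by
          gcongr; exact hlo
      _ = fpUnit * (Real.exp X * lowerGamma s X) := by rw [mul_assoc, hv0]
      _ ≤ _ := by gcongr; exact lowerGamma_le_Gamma hs0
  · calc fpUnit * (Real.exp X * Real.Gamma s)
        ≤ fpUnit * (Real.exp X * (lowerGamma s X + Real.exp (-X))) := by
          gcongr; exact Gamma_le_lowerGamma_add hs0 hs1 hX1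
      _ = fpUnit * v 0 * (10 / 7) ^ j + fpUnit * 1 := by
          rw [mul_assoc, hv0, mul_add (Real.exp X), ← Real.exp_add]; simp; ring
      _ ≤ (hornerHi fpUnit (fun _ => 13 * 7 ^ 13) (fun _ => 13 * 10 ^ 13)
            (fun k => 7 ^ 13 * (j + 13 * k)) (fpUnit * 3 ^ 104) 500 0 : ℕ) * (10 / 7) ^ j
            + fpUnit * (10 / 7) ^ j := by
          gcongr
          exact one_le_pow₀ (by norm_num)
      _ = _ := by unfold gammaHi; push_cast; ring

/-- Bounds for `Γ(j / 13)` from integer comparisons. The factor `e ^ X` is eliminated by dividing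
by the case `j = 13`, where `Γ(1) = 1`. -/
theorem gamma_bounds (j l u : ℕ)
    (h : 0 < j ∧ j ≤ 13 ∧ l * gammaHi 13 * 10 ^ (13 - j) ≤ 10 ^ 32 * gammaLo j * 7 ^ (13 - j) ∧
      10 ^ 32 * gammaHi j * 7 ^ (13 - j) ≤ u * gammaLo 13 * 10 ^ (13 - j)) :
    (l : ℝ) / 10 ^ 32 ≤ Real.Gamma ((j : ℝ) / 13) ∧
      Real.Gamma ((j : ℝ) / 13) ≤ (u : ℝ) / 10 ^ 32 := by
  obtain ⟨hj, hj', hl, hu⟩ := h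
  obtain ⟨a1, a2⟩ := scaledGamma_bounds j hj hj'
  obtain ⟨b1, b2⟩ := scaledGamma_bounds 13 (by norm_num) le_rfl
  rw [show ((13 : ℕ) : ℝ) / 13 = 1 by norm_num, Real.Gamma_one, mul_one] at b1 b2
  have hl' : (l : ℝ) * gammaHi 13 * 10 ^ (13 - j) ≤ 10 ^ 32 * gammaLo j * 7 ^ (13 - j) := by
    exact_mod_cast hl
  have hu' : (10 : ℝ) ^ 32 * gammaHi j * 7 ^ (13 - j) ≤ u * gammaLo 13 * 10 ^ (13 - j) := by
    exact_mod_cast hu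
  have hE : (0 : ℝ) < fpUnit * Real.exp ((10 / 7) ^ 13) :=
    mul_pos (by norm_num [fpUnit]) (Real.exp_pos _)
  set E : ℝ := fpUnit * Real.exp ((10 / 7) ^ 13) with hEdef
  rw [← mul_assoc, ← hEdef] at a1 a2
  have e13 : ((10 : ℝ) / 7) ^ 13 = (10 / 7) ^ j * (10 ^ (13 - j) / 7 ^ (13 - j)) := by
    rw [← div_pow, ← pow_add]; congr 1; omega
  have hp : (0 : ℝ) < (10 / 7) ^ j := by positivity
  have h5 : (0 : ℝ) < 7 ^ (13 - j) := by positivity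
  constructor
  · rw [div_le_iff₀ (by positivity)]
    refine le_of_mul_le_mul_left ?_ hE
    calc E * l ≤ gammaHi 13 * (10 / 7) ^ 13 * l := by gcongr
      _ = (10 / 7) ^ j * (l * gammaHi 13 * 10 ^ (13 - j)) / 7 ^ (13 - j) := by rw [e13]; ring
      _ ≤ (10 / 7) ^ j * (10 ^ 32 * gammaLo j * 7 ^ (13 - j)) / 7 ^ (13 - j) := by gcongr
      _ = 10 ^ 32 * (gammaLo j * (10 / 7) ^ j) := by field_simp
      _ ≤ 10 ^ 32 * (E * Real.Gamma ((j : ℝ) / 13)) := by gcongr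
      _ = _ := by ring
  · rw [le_div_iff₀ (by positivity)]
    refine le_of_mul_le_mul_left ?_ hE
    calc E * (Real.Gamma ((j : ℝ) / 13) * 10 ^ 32)
        = (10 : ℝ) ^ 32 * (E * Real.Gamma ((j : ℝ) / 13)) := by ring
      _ ≤ (10 : ℝ) ^ 32 * (gammaHi j * (10 / 7) ^ j) := by gcongr
      _ = (10 / 7 : ℝ) ^ j * (10 ^ 32 * gammaHi j * 7 ^ (13 - j)) / 7 ^ (13 - j) := by field_simp
      _ ≤ (10 / 7 : ℝ) ^ j * (u * gammaLo 13 * 10 ^ (13 - j)) / 7 ^ (13 - j) := by gcongr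
      _ = gammaLo 13 * (10 / 7 : ℝ) ^ 13 * u := by rw [e13]; ring
      _ ≤ E * u := by gcongr

end Gamma

/-! ### Telescoping estimate for tails -/

section Tail
open Filter Topology

/-- Telescoping estimate for a tail: if `G i - G (i + 1)` agrees with `T i` up to a relative error
`η`, then `∑ T` agrees with `G 0` up to the same relative error. The growth condition on `G` and
the divergence of the harmonic series force `G → 0`. -/
theorem telescoping_tail {T G : ℕ → ℝ} {η K : ℝ} (N : ℕ) (hN : 0 < N)
    (hη : η < 1) (hG : ∀ i, 0 ≤ G i)
    (hGK : ∀ i, G i ≤ K * ((i + N : ℕ) : ℝ) * T i) (hT : ∀ i, 0 < T i)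
    (h1 : ∀ i, G i - G (i + 1) ≤ (1 + η) * T i)
    (h2 : ∀ i, (1 - η) * T i ≤ G i - G (i + 1)) :
    Summable T ∧ (1 - η) * ∑' i, T i ≤ G 0 ∧ G 0 ≤ (1 + η) * ∑' i, T i := by
  have hη' : 0 < 1 - η := by linarith
  have hpart : ∀ n, ∑ i ∈ Finset.range n, (1 - η) * T i ≤ G 0 := fun n => by
    calc _ ≤ ∑ i ∈ Finset.range n, (G i - G (i + 1)) := Finset.sum_le_sum fun i _ => h2 i
      _ = G 0 - G n := Finset.sum_range_sub' G n
      _ ≤ G 0 := by linarith [hG n]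
  have hs1 : Summable fun i => (1 - η) * T i :=
    summable_of_sum_range_le (fun i => (mul_pos hη' (hT i)).le) hpart
  have hs : Summable T := (summable_mul_left_iff hη'.ne').mp hs1
  refine ⟨hs, ?_, ?_⟩
  · rw [← tsum_mul_left]
    exact hs1.tsum_le_of_sum_range_le hpart
  have hanti : Antitone G := antitone_nat_of_succ_le fun i => by
    have := mul_pos hη' (hT i)
    linarith [h2 i]
  have hlim := tendsto_atTop_ciInf hanti ⟨0, by rintro _ ⟨i, rfl⟩; exact hG i⟩
  set L := ⨅ i, G i
  have hLG : ∀ i, L ≤ G i := fun i => ciInf_le ⟨0, by rintro _ ⟨i, rfl⟩; exact hG i⟩ i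
  have hL : L ≤ 0 := by
    by_contra! hL
    have hle : ∀ i : ℕ, 1 / ((i + N : ℕ) : ℝ) ≤ K / L * T i := fun i => by
      have hp : (0 : ℝ) < ((i + N : ℕ) : ℝ) := by exact_mod_cast Nat.add_pos_right i hN
      have := (hLG i).trans (hGK i)
      rw [div_le_iff₀ hp, div_mul_eq_mul_div, div_mul_eq_mul_div, le_div_iff₀ hL]
      linarith
    have hsum : Summable fun i : ℕ => 1 / ((i + N : ℕ) : ℝ) :=
      Summable.of_nonneg_of_le (fun i => by positivity) hle (hs.mul_left _)
    exact Real.not_summable_one_div_natCast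
      ((summable_nat_add_iff (f := fun n : ℕ => 1 / (n : ℝ)) N).mp hsum)
  have hsumT := (hs.mul_left (1 + η)).hasSum.tendsto_sum_nat
  have hfin : G 0 - L ≤ ∑' i, (1 + η) * T i := by
    refine le_of_tendsto_of_tendsto (hlim.const_sub (G 0)) hsumT (Eventually.of_forall fun n => ?_)
    show G 0 - G n ≤ ∑ i ∈ Finset.range n, (1 + η) * T i
    rw [← Finset.sum_range_sub' G n]
    exact Finset.sum_le_sum fun i _ => h1 i
  rw [tsum_mul_left] at hfin
  linarith

end Tail

/-! ### Computable integer polynomials -/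

section ListPoly

/-- Value at `x` of the polynomial with integer coefficient list `l`, constant term first. -/
def evalL (x : ℝ) : List ℤ → ℝ
  | [] => 0
  | c :: l => c + x * evalL x l

def addL : List ℤ → List ℤ → List ℤ
  | [], m => m
  | l, [] => l
  | c :: l, e :: m => (c + e) :: addL l m

def scaleL (c : ℤ) : List ℤ → List ℤ
  | [] => []
  | e :: l => c * e :: scaleL c l

def mulL : List ℤ → List ℤ → List ℤ
  | [], _ => []
  | c :: l, m => addL (scaleL c m) (0 :: mulL l m)

def powL (l : List ℤ) : ℕ → List ℤ
  | 0 => [1]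
  | n + 1 => mulL l (powL l n)

/-- Composition `l ∘ m`. -/
def compL (m : List ℤ) : List ℤ → List ℤ
  | [] => []
  | c :: l => addL [c] (mulL m (compL m l))

variable (x : ℝ)

theorem evalL_add (l m : List ℤ) : evalL x (addL l m) = evalL x l + evalL x m := by
  induction l, m using addL.induct with
  | case1 m => simp [addL, evalL]
  | case2 l h => cases l <;> simp [addL, evalL]
  | case3 c l e m ih => simp only [addL, evalL, ih]; push_cast; ring

theorem evalL_scale (c : ℤ) (l : List ℤ) : evalL x (scaleL c l) = c * evalL x l := by
  induction l with
  | nil => simp [scaleL, evalL]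
  | cons e l ih => simp only [scaleL, evalL, ih]; push_cast; ring

theorem evalL_mul (l m : List ℤ) : evalL x (mulL l m) = evalL x l * evalL x m := by
  induction l with
  | nil => simp [mulL, evalL]
  | cons e l ih => simp only [mulL, evalL, evalL_add, evalL_scale, ih]; push_cast; ring

theorem evalL_pow (l : List ℤ) (n : ℕ) : evalL x (powL l n) = evalL x l ^ n := by
  induction n with
  | zero => simp [powL, evalL]
  | succ n ih => rw [powL, evalL_mul, ih, pow_succ']

theorem evalL_comp (m l : List ℤ) : evalL x (compL m l) = evalL (evalL x m) l := by
  induction l with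
  | nil => simp [compL, evalL]
  | cons c l ih => simp only [compL, evalL_add, evalL_mul, ih, evalL]; ring

theorem evalL_nonneg {x : ℝ} (hx : 0 ≤ x) (l : List ℤ) (h : ∀ c ∈ l, 0 ≤ c) :
    0 ≤ evalL x l := by
  induction l with
  | nil => simp [evalL]
  | cons c l ih =>
    have h1 : (0 : ℝ) ≤ c := by exact_mod_cast h c (by simp)
    have h2 := ih fun e he => h e (by simp [he])
    simp only [evalL]
    positivity

end ListPoly

/-! ### Bounds for the hypergeometric series -/

section Hypergeometric

theorem poch_pos {a : ℝ} (ha : 0 < a) (n : ℕ) : 0 < poch a n :=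
  div_pos (Real.Gamma_pos_of_pos (by positivity)) (Real.Gamma_pos_of_pos ha)

theorem poch_succ {a : ℝ} (ha : 0 < a) (n : ℕ) : poch a (n + 1) = poch a n * (a + n) := by
  unfold poch
  have h : a + n ≠ 0 := by positivity
  rw [show a + ((n + 1 : ℕ) : ℝ) = a + n + 1 by push_cast; ring, Real.Gamma_add_one h]
  ring

/-- The general term of the series `F32 (h / 13) (h / 13) (b / 13) 1 1`. -/
noncomputable def term (h b n : ℕ) : ℝ :=
  poch ((h : ℝ) / 13) n * poch ((h : ℝ) / 13) n * poch ((b : ℝ) / 13) n /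
    (poch 1 n * poch 1 n * poch 1 n)

/-- Numerator of `term h b (n + 1) / term h b n` over the denominator `ratDen n`. -/
def ratNum (h b n : ℕ) : ℕ := (13 * n + h) ^ 2 * (13 * n + b)

/-- Denominator of the ratio of consecutive terms. -/
def ratDen (n : ℕ) : ℕ := 13 ^ 3 * (n + 1) ^ 3

variable {h b : ℕ}

theorem term_pos (hh : 0 < h) (hb : 0 < b) (n : ℕ) : 0 < term h b n := by
  have h1 := poch_pos (a := (h : ℝ) / 13) (by positivity) n
  have h2 := poch_pos (a := (b : ℝ) / 13) (by positivity) n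
  have h3 := poch_pos (a := 1) (by positivity) n
  unfold term
  positivity

theorem term_zero (hh : 0 < h) (hb : 0 < b) : term h b 0 = 1 := by
  have h1 : Real.Gamma ((h : ℝ) / 13) ≠ 0 := (Real.Gamma_pos_of_pos (by positivity)).ne'
  have h2 : Real.Gamma ((b : ℝ) / 13) ≠ 0 := (Real.Gamma_pos_of_pos (by positivity)).ne'
  simp [term, poch, h1, h2]

theorem term_succ (hh : 0 < h) (hb : 0 < b) (n : ℕ) :
    term h b (n + 1) * ratDen n = term h b n * ratNum h b n := by
  have h3 := poch_pos (a := 1) (by positivity) n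
  unfold term ratDen ratNum
  rw [poch_succ (a := (h : ℝ) / 13) (by positivity), poch_succ (a := (b : ℝ) / 13) (by positivity),
    poch_succ (a := 1) (by positivity)]
  have : (1 : ℝ) + n ≠ 0 := by positivity
  push_cast
  field_simp
  ring

/-- The polynomial `n = 100 + x`. -/
def shift0 : List ℤ := [100, 1]

/-- The polynomial `n + 1 = 101 + x`. -/
def shift1 : List ℤ := [101, 1]

/-- Common denominator `W = 10 ^ 36 * 13 ^ 3 * n ^ 17 * (n + 1) ^ 20` at `n = 100 + x`. -/
def denL : List ℤ :=
  scaleL (10 ^ 36 * 13 ^ 3) (mulL (powL shift0 17) (powL shift1 20))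

/-- The numerator of `p n - (term (n + 1) / term n) * p (n + 1) - 1` over `denL`, at
`n = 100 + x`, where `p n = C(n) / (10 ^ 36 * n ^ 17)`. -/
def defectL (h b : ℕ) (C : List ℤ) : List ℤ :=
  addL (scaleL (13 ^ 3) (mulL (compL shift0 C) (powL shift1 20)))
    (addL (scaleL (-1) (mulL (mulL (powL [1300 + h, 13] 2) [1300 + b, 13])
        (mulL (compL shift1 C) (powL shift0 17))))
      (scaleL (-1) denL))

/-- Integer form of the hypotheses needed to bound the series: the approximate antidifference
`p n = C(n) / (10 ^ 36 * n ^ 17)` satisfies `0 ≤ p n ≤ 10 * n` and has relative defect at most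
`10 ^ (-33)` for all `n ≥ 100`, `v0` and `w0` bracket `fpUnit * p 100` with that margin, and the
backward recurrences from `n = 100` to `n = 0` end within `[l, u] / 10 ^ 32`. -/
def certOK (h b : ℕ) (C : List ℤ) (v0 w0 l u : ℕ) : Bool :=
  decide (0 < h ∧ 0 < b) &&
  (compL shift0 C).all (fun c => decide (0 ≤ c)) &&
  (addL (scaleL (10 ^ 37) (powL shift0 18)) (scaleL (-1) (compL shift0 C))).all
    (fun c => decide (0 ≤ c)) &&
  (addL denL (scaleL (10 ^ 33) (defectL h b C))).all (fun c => decide (0 ≤ c)) &&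
  (addL denL (scaleL (-10 ^ 33) (defectL h b C))).all (fun c => decide (0 ≤ c)) &&
  (addL (scaleL (10 ^ 40 * 10 ^ 33) (compL [100] C))
    [-(v0 * (10 ^ 36 * 100 ^ 17 * (10 ^ 33 + 1)))]).all (fun c => decide (0 ≤ c)) &&
  (addL (scaleL (-(10 ^ 40 * 10 ^ 33)) (compL [100] C))
    [w0 * (10 ^ 36 * 100 ^ 17 * (10 ^ 33 - 1))]).all (fun c => decide (0 ≤ c)) &&
  decide (l * 10 ^ 8 ≤ hornerLo fpUnit ratDen (ratNum h b) ratDen v0 100 0) &&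
  decide (hornerHi fpUnit ratDen (ratNum h b) ratDen w0 100 0 ≤ u * 10 ^ 8)

/-- Bounds for the hypergeometric value from the integer certificate `certOK`: the tail beyond
`n = 100` is estimated by telescoping with `p`, the first `100` terms by backward recurrence. -/
theorem F32_bounds (h b : ℕ) (C : List ℤ) (v0 w0 l u : ℕ) (hc : certOK h b C v0 w0 l u = true) :
    (l : ℝ) / 10 ^ 32 ≤ F32 ((h : ℝ) / 13) ((h : ℝ) / 13) ((b : ℝ) / 13) 1 1 ∧
      F32 ((h : ℝ) / 13) ((h : ℝ) / 13) ((b : ℝ) / 13) 1 1 ≤ (u : ℝ) / 10 ^ 32 := by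
  simp only [certOK, Bool.and_eq_true, decide_eq_true_eq, List.all_eq_true] at hc
  obtain ⟨⟨⟨⟨⟨⟨⟨⟨⟨hh, hb⟩, c1⟩, c2⟩, c3⟩, c4⟩, c5⟩, c6⟩, c7⟩, c8⟩ := hc
  have hpos := term_pos hh hb
  have hsucc := term_succ hh hb
  let p : ℕ → ℝ := fun n => evalL n C / (10 ^ 36 * (n : ℝ) ^ 17)
  have ev0 : ∀ i : ℕ, evalL i shift0 = ((i + 100 : ℕ) : ℝ) := fun i => by
    simp [shift0, evalL]; ring
  have ev1 : ∀ i : ℕ, evalL i shift1 = ((i + 1 + 100 : ℕ) : ℝ) := fun i => by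
    simp [shift1, evalL]; ring
  have hW : ∀ i : ℕ, evalL i denL =
      10 ^ 36 * 13 ^ 3 * (((i + 100 : ℕ) : ℝ) ^ 17 * ((i + 1 + 100 : ℕ) : ℝ) ^ 20) := fun i => by
    simp only [denL, evalL_scale, evalL_mul, evalL_pow, ev0, ev1]; push_cast; ring
  have hWpos : ∀ i : ℕ, 0 < evalL i denL := fun i => by rw [hW]; positivity
  have hDef : ∀ i : ℕ, p (i + 100) * term h b (i + 100) - p (i + 1 + 100) * term h b (i + 1 + 100)
      = (1 + evalL i (defectL h b C) / evalL i denL) * term h b (i + 100) := fun i => by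
    have e := hsucc (i + 100)
    have hden : (0 : ℝ) < ratDen (i + 100) := by unfold ratDen; positivity
    have e' : term h b (i + 1 + 100) =
        term h b (i + 100) * ratNum h b (i + 100) / ratDen (i + 100) := by
      rw [eq_div_iff hden.ne', ← e]
    rw [e', one_add_div (hWpos i).ne', hW]
    simp only [defectL, evalL_add, evalL_scale, evalL_mul, evalL_pow, evalL_comp, ev0, ev1, hW, p]
    have hn : (0 : ℝ) < ((i + 100 : ℕ) : ℝ) := by positivity
    have hn1 : (0 : ℝ) < ((i + 1 + 100 : ℕ) : ℝ) := by positivity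
    have r1 : (ratNum h b (i + 100) : ℝ) =
        evalL i [1300 + (h : ℤ), 13] ^ 2 * evalL i [1300 + (b : ℤ), 13] := by
      simp [evalL, ratNum]; ring
    have r2 : (ratDen (i + 100) : ℝ) = 13 ^ 3 * ((i + 1 + 100 : ℕ) : ℝ) ^ 3 := by
      simp [ratDen]; ring
    rw [r1, r2]
    generalize evalL i [1300 + (h : ℤ), 13] = A
    generalize evalL i [1300 + (b : ℤ), 13] = B
    generalize ((i + 100 : ℕ) : ℝ) = n at *
    generalize ((i + 1 + 100 : ℕ) : ℝ) = m at *
    generalize evalL n C = P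
    generalize evalL m C = R
    field_simp
    push_cast
    ring
  have hp0 : ∀ i : ℕ, 0 ≤ p (i + 100) := fun i => by
    have := evalL_nonneg (Nat.cast_nonneg i) _ c1
    rw [evalL_comp, ev0] at this
    simp only [p]
    positivity
  have hpK : ∀ i : ℕ, p (i + 100) ≤ 10 * ((i + 100 : ℕ) : ℝ) := fun i => by
    have := evalL_nonneg (Nat.cast_nonneg i) _ c2
    simp only [evalL_add, evalL_scale, evalL_comp, ev0, evalL_pow] at this
    simp only [p]
    rw [div_le_iff₀ (by positivity)]
    push_cast at this ⊢
    linarith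
  have hδ : ∀ i : ℕ, |evalL i (defectL h b C) / evalL i denL| ≤ 1 / 10 ^ 33 := fun i => by
    have d1 := evalL_nonneg (Nat.cast_nonneg i) _ c3
    have d2 := evalL_nonneg (Nat.cast_nonneg i) _ c4
    simp only [evalL_add, evalL_scale] at d1 d2
    push_cast at d1 d2
    rw [abs_div, abs_of_pos (hWpos i), div_le_div_iff₀ (hWpos i) (by positivity), ← le_div_iff₀
      (by positivity), abs_le]
    constructor <;> linarith
  obtain ⟨hsT, hT1, hT2⟩ := telescoping_tail (T := fun i => term h b (i + 100))
    (G := fun i => p (i + 100) * term h b (i + 100)) (η := 1 / 10 ^ 33) (K := 10) 100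
    (by norm_num) (by norm_num)
    (fun i => mul_nonneg (hp0 i) (hpos _).le)
    (fun i => mul_le_mul_of_nonneg_right (hpK i) (hpos _).le)
    (fun i => hpos _)
    (fun i => by
      have := (abs_le.mp (hδ i)).2
      rw [hDef i]
      exact mul_le_mul_of_nonneg_right (by linarith) (hpos _).le)
    (fun i => by
      have := (abs_le.mp (hδ i)).1
      rw [hDef i]
      exact mul_le_mul_of_nonneg_right (by linarith) (hpos _).le)
  have hs : Summable (term h b) := (summable_nat_add_iff 100).mp hsT
  -- Normalised tails; they obey the backward recurrence `v k = 1 + (t (k + 1) / t k) * v (k + 1)`.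
  let v : ℕ → ℝ := fun k => (∑' i, term h b (i + k)) / term h b k
  have hd : ∀ k, 0 < ratDen k := fun k => by unfold ratDen; positivity
  have hv : ∀ k, v k * ratDen k = ratDen k + ratNum h b k * v (k + 1) := fun k => by
    have hsk : Summable fun i => term h b (i + k) := (summable_nat_add_iff k).mpr hs
    have e := hsk.tsum_eq_zero_add
    have e2 : ∀ i, term h b (i + 1 + k) = term h b (i + (k + 1)) := fun i => by congr 1; ring
    simp only [zero_add, e2] at e
    have hk := hsucc k
    have hk0 := hpos k
    have hk1 := hpos (k + 1)
    simp only [v]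
    rw [e]
    field_simp
    linear_combination (∑' i, term h b (i + (k + 1))) * hk
  have hv0 : v 0 = F32 ((h : ℝ) / 13) ((h : ℝ) / 13) ((b : ℝ) / 13) 1 1 := by
    simp only [v, term_zero hh hb, div_one, add_zero]
    rfl
  have ht := hpos 100
  have hv100 : v (0 + 100) * term h b 100 = ∑' i, term h b (i + 100) := by
    simp only [v, zero_add]; field_simp
  simp only [zero_add] at hT1 hT2
  rw [← hv100, ← mul_assoc] at hT1 hT2
  have hT1' := le_of_mul_le_mul_right hT1 ht
  have hT2' := le_of_mul_le_mul_right hT2 ht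
  have hp100 : p 100 * (10 ^ 36 * 100 ^ 17) = evalL 100 C := by
    simp only [p]; push_cast; field_simp
  have c5' := evalL_nonneg (x := 0) le_rfl _ c5
  have c6' := evalL_nonneg (x := 0) le_rfl _ c6
  simp only [evalL_add, evalL_scale, evalL_comp, evalL] at c5' c6'
  push_cast at c5' c6'
  simp only [mul_zero, add_zero] at c5' c6'
  rw [← hp100] at c5' c6'
  have hu : (fpUnit : ℝ) = 10 ^ 40 := by norm_num [fpUnit]
  have lo := hornerLo_le (S := fpUnit) hd hv v0 100 0 (by rw [hu]; linarith)
  have hi := le_hornerHi (S := fpUnit) hd hv w0 100 0 (by rw [hu]; linarith)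
  rw [hv0, hu] at lo hi
  have c7' : (l : ℝ) * 10 ^ 8 ≤ hornerLo fpUnit ratDen (ratNum h b) ratDen v0 100 0 := by
    exact_mod_cast c7
  have c8' : (hornerHi fpUnit ratDen (ratNum h b) ratDen w0 100 0 : ℝ) ≤ u * 10 ^ 8 := by
    exact_mod_cast c8
  constructor
  · rw [div_le_iff₀ (by positivity)]; linarith
  · rw [le_div_iff₀ (by positivity)]; linarith

end Hypergeometric

/-! ### The numerical values

In each `F32_h` the list holds the coefficients of the numerator of the approximate antidifference
`p n`, rounded to multiples of `10 ^ (-36)`, constant term first. -/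

theorem gamma_1 : ((1249391081709653954354990427076723 : ℕ) : ℝ) / 10 ^ 32 ≤ Real.Gamma (((1 : ℕ) : ℝ) / 13) ∧
    Real.Gamma (((1 : ℕ) : ℝ) / 13) ≤ ((1249391081709653954354990427076725 : ℕ) : ℝ) / 10 ^ 32 :=
  gamma_bounds _ _ _ (by decide +kernel)

theorem gamma_2 : ((605656683114071460040732571051744 : ℕ) : ℝ) / 10 ^ 32 ≤ Real.Gamma (((2 : ℕ) : ℝ) / 13) ∧
    Real.Gamma (((2 : ℕ) : ℝ) / 13) ≤ ((605656683114071460040732571051746 : ℕ) : ℝ) / 10 ^ 32 :=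
  gamma_bounds _ _ _ (by decide +kernel)

theorem gamma_3 : ((394584185006395187590282023377463 : ℕ) : ℝ) / 10 ^ 32 ≤ Real.Gamma (((3 : ℕ) : ℝ) / 13) ∧
    Real.Gamma (((3 : ℕ) : ℝ) / 13) ≤ ((394584185006395187590282023377465 : ℕ) : ℝ) / 10 ^ 32 :=
  gamma_bounds _ _ _ (by decide +kernel)

theorem gamma_4 : ((291308362674986896987806663878903 : ℕ) : ℝ) / 10 ^ 32 ≤ Real.Gamma (((4 : ℕ) : ℝ) / 13) ∧
    Real.Gamma (((4 : ℕ) : ℝ) / 13) ≤ ((291308362674986896987806663878905 : ℕ) : ℝ) / 10 ^ 32 :=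
  gamma_bounds _ _ _ (by decide +kernel)

theorem gamma_5 : ((230934713030555689917505320233473 : ℕ) : ℝ) / 10 ^ 32 ≤ Real.Gamma (((5 : ℕ) : ℝ) / 13) ∧
    Real.Gamma (((5 : ℕ) : ℝ) / 13) ≤ ((230934713030555689917505320233475 : ℕ) : ℝ) / 10 ^ 32 :=
  gamma_bounds _ _ _ (by decide +kernel)

theorem gamma_6 : ((191880692937190217422031660298205 : ℕ) : ℝ) / 10 ^ 32 ≤ Real.Gamma (((6 : ℕ) : ℝ) / 13) ∧
    Real.Gamma (((6 : ℕ) : ℝ) / 13) ≤ ((191880692937190217422031660298207 : ℕ) : ℝ) / 10 ^ 32 :=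
  gamma_bounds _ _ _ (by decide +kernel)

theorem gamma_7 : ((164928872625550082225320939477343 : ℕ) : ℝ) / 10 ^ 32 ≤ Real.Gamma (((7 : ℕ) : ℝ) / 13) ∧
    Real.Gamma (((7 : ℕ) : ℝ) / 13) ≤ ((164928872625550082225320939477345 : ℕ) : ℝ) / 10 ^ 32 :=
  gamma_bounds _ _ _ (by decide +kernel)

theorem gamma_8 : ((145492798830391608974656387539303 : ℕ) : ℝ) / 10 ^ 32 ≤ Real.Gamma (((8 : ℕ) : ℝ) / 13) ∧
    Real.Gamma (((8 : ℕ) : ℝ) / 13) ≤ ((145492798830391608974656387539305 : ℕ) : ℝ) / 10 ^ 32 :=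
  gamma_bounds _ _ _ (by decide +kernel)

theorem gamma_9 : ((131040517420773254323132705281454 : ℕ) : ℝ) / 10 ^ 32 ≤ Real.Gamma (((9 : ℕ) : ℝ) / 13) ∧
    Real.Gamma (((9 : ℕ) : ℝ) / 13) ≤ ((131040517420773254323132705281456 : ℕ) : ℝ) / 10 ^ 32 :=
  gamma_bounds _ _ _ (by decide +kernel)

theorem gamma_10 : ((120064973802277138328408826116898 : ℕ) : ℝ) / 10 ^ 32 ≤ Real.Gamma (((10 : ℕ) : ℝ) / 13) ∧
    Real.Gamma (((10 : ℕ) : ℝ) / 13) ≤ ((120064973802277138328408826116900 : ℕ) : ℝ) / 10 ^ 32 :=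
  gamma_bounds _ _ _ (by decide +kernel)

theorem gamma_11 : ((111616662172207613769570496101005 : ℕ) : ℝ) / 10 ^ 32 ≤ Real.Gamma (((11 : ℕ) : ℝ) / 13) ∧
    Real.Gamma (((11 : ℕ) : ℝ) / 13) ≤ ((111616662172207613769570496101007 : ℕ) : ℝ) / 10 ^ 32 :=
  gamma_bounds _ _ _ (by decide +kernel)

theorem gamma_12 : ((105070390185872040391987119201742 : ℕ) : ℝ) / 10 ^ 32 ≤ Real.Gamma (((12 : ℕ) : ℝ) / 13) ∧
    Real.Gamma (((12 : ℕ) : ℝ) / 13) ≤ ((105070390185872040391987119201744 : ℕ) : ℝ) / 10 ^ 32 :=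
  gamma_bounds _ _ _ (by decide +kernel)

theorem F32_1 : ((100649779917758301027638896451118 : ℕ) : ℝ) / 10 ^ 32 ≤
      F32 (((1 : ℕ) : ℝ) / 13) (((1 : ℕ) : ℝ) / 13) (((9 : ℕ) : ℝ) / 13) 1 1 ∧
    F32 (((1 : ℕ) : ℝ) / 13) (((1 : ℕ) : ℝ) / 13) (((9 : ℕ) : ℝ) / 13) 1 1 ≤
      ((100649779917758301027638896451120 : ℕ) : ℝ) / 10 ^ 32 :=
  F32_bounds 1 9
   [76082801234069071062490620448278921460,
    14808602445159644327744827797612093477,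
    -9685708065658057716825130303500587740,
    -2076532461640532556117055860590143061,
    1570281450615594007831986165387770770,
    374148438591480539617312776917532318,
    -335273529784589011211880465933253385,
    -89665109231955815282423108183823864,
    98580711663095983599963610429649861,
    29892999068555140571482014438542383,
    -42508928483122908374599822369276367,
    -14730808111932413490028668869811207,
    29633842636141571299030337804228111,
    11710003067513283896978179100655079,
    -40057536180902607536934818121610383,
    -17329512263846222570425197066848099,
    185258643795229161082819619404985259,
    571428571428571428571428571428571429,
    866666666666666666666666666666666667]
    872399460516444760834523599169991688467491
    872399460516444760834523599169993433266413 _ _ (by decide +kernel)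

theorem F32_2 : ((101372907501796554358552110280566 : ℕ) : ℝ) / 10 ^ 32 ≤
      F32 (((2 : ℕ) : ℝ) / 13) (((2 : ℕ) : ℝ) / 13) (((5 : ℕ) : ℝ) / 13) 1 1 ∧
    F32 (((2 : ℕ) : ℝ) / 13) (((2 : ℕ) : ℝ) / 13) (((5 : ℕ) : ℝ) / 13) 1 1 ≤
      ((101372907501796554358552110280568 : ℕ) : ℝ) / 10 ^ 32 :=
  F32_bounds 2 5
   [119628671973896414599708225310657083575,
    28375073254843664528988614610186495553,
    -15002204700946190522961570126261222996,
    -3895789590693588193523448750555481579,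
    2391535204614700334704171540939375335,
    684764360169360372751935755480257023,
    -500826264965565252043427491463708859,
    -159241324868140135295955008654331529,
    143897505852287472371697834110713623,
    51092528929332110988329820769797211,
    -60256278024161766252526206015889918,
    -23898862470350306788752136462926155,
    40303149411079523821429141057305377,
    17595541199723018430314844699640215,
    -50929646984862078001121929161551925,
    -23072991409306257249012168511274057,
    207544985793959802167736504261812059,
    582352941176470588235294117647058824,
    764705882352941176470588235294117647]
    770550142682797011485925882657091717629850
    770550142682797011485925882657093258730136 _ _ (by decide +kernel)

theorem F32_3 : ((100578887071660682564788321274847 : ℕ) : ℝ) / 10 ^ 32 ≤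
      F32 (((3 : ℕ) : ℝ) / 13) (((3 : ℕ) : ℝ) / 13) (((1 : ℕ) : ℝ) / 13) 1 1 ∧
    F32 (((3 : ℕ) : ℝ) / 13) (((3 : ℕ) : ℝ) / 13) (((1 : ℕ) : ℝ) / 13) 1 1 ≤
      ((100578887071660682564788321274849 : ℕ) : ℝ) / 10 ^ 32 :=
  F32_bounds 3 1
   [175330160233849388104580488323142301456,
    30850324982565175633333967881845428724,
    -21553731175434278464056622599806485076,
    -4150382039700668144292672827136073285,
    3358541352951703464012397179045293253,
    712671206226309879013547345198351250,
    -684912292479442528640773740830489866,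
    -161256167885347336674182234034919728,
    190657207915533986817296241543642045,
    50066726815961857482415700992556391,
    -76795138537129130082493631814811233,
    -22488064432937043805105534824868512,
    48901699581832454614600224644695583,
    15721783062407462013939527998269712,
    -57967656256813444594822020557286760,
    -19236138704238662356769295202912402,
    217049032838506522717049032838506523,
    559210526315789473684210526315789474,
    684210526315789473684210526315789474]
    689824316668036799764148425161612336546339
    689824316668036799764148425161613716194973 _ _ (by decide +kernel)

theorem F32_5 : ((115075196351662535839204097002423 : ℕ) : ℝ) / 10 ^ 32 ≤
      F32 (((5 : ℕ) : ℝ) / 13) (((5 : ℕ) : ℝ) / 13) (((6 : ℕ) : ℝ) / 13) 1 1 ∧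
    F32 (((5 : ℕ) : ℝ) / 13) (((5 : ℕ) : ℝ) / 13) (((6 : ℕ) : ℝ) / 13) 1 1 ≤
      ((115075196351662535839204097002425 : ℕ) : ℝ) / 10 ^ 32 :=
  F32_bounds 5 6
   [22417993905233509700960155102450500220,
    17941538760238408760292480292930854753,
    -3079459025494467617144376781505733729,
    -2653195607209352748784377075907280306,
    545739825094436176215634884403648314,
    508143040590007341231969248490821168,
    -129599054128706925620463246737684446,
    -130767758359201699525934242388022214,
    43396127064804479266656439191796843,
    47433079493985676817568080332631041,
    -22004148971433267636612060731909907,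
    -25848777432721308710976282164459574,
    18781362002589784390730796477449405,
    23139947280695119294356683605442432,
    -32345012100524685900255416508933194,
    -39287654003373066918217419889660692,
    192047565960609438870308435525826830,
    765217391304347826086956521739130435,
    1300000000000000000000000000000000000]
    1307671339060867930276179535721446937861910
    1307671339060867930276179535721449553204589 _ _ (by decide +kernel)

theorem F32_6 : ((106231373966718307226231868506886 : ℕ) : ℝ) / 10 ^ 32 ≤
      F32 (((6 : ℕ) : ℝ) / 13) (((6 : ℕ) : ℝ) / 13) (((2 : ℕ) : ℝ) / 13) 1 1 ∧
    F32 (((6 : ℕ) : ℝ) / 13) (((6 : ℕ) : ℝ) / 13) (((2 : ℕ) : ℝ) / 13) 1 1 ≤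
      ((106231373966718307226231868506888 : ℕ) : ℝ) / 10 ^ 32 :=
  F32_bounds 6 2
   [38523973642472245265494311793153705315,
    19506849219790794490339067009374798492,
    -5113352264893971464799296541062973045,
    -2823543058491889931579399888574525839,
    870485327218710298449089710949235248,
    527581624796965966032444672215833550,
    -197026964586894204250983201290983808,
    -131891783620139265720220410754043627,
    62219745577230408091381722527084406,
    46209562586994030767458509163494377,
    -29335268049350514265920301361152919,
    -24141349868162275191098516868875696,
    22878126895613556882691014481935506,
    20523682423754433009947495644991949,
    -35383276660687033120029987415995073,
    -32719328777914155384981772216828183,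
    187139001349527665317139001349527665,
    676666666666666666666666666666666667,
    1083333333333333333333333333333333333]
    1090118680829048410314569947215567701678349
    1090118680829048410314569947215569881915711 _ _ (by decide +kernel)

theorem F32_9 : ((141965395637213438377595805692037 : ℕ) : ℝ) / 10 ^ 32 ≤
      F32 (((9 : ℕ) : ℝ) / 13) (((9 : ℕ) : ℝ) / 13) (((3 : ℕ) : ℝ) / 13) 1 1 ∧
    F32 (((9 : ℕ) : ℝ) / 13) (((9 : ℕ) : ℝ) / 13) (((3 : ℕ) : ℝ) / 13) 1 1 ≤
      ((141965395637213438377595805692039 : ℕ) : ℝ) / 10 ^ 32 :=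
  F32_bounds 9 3
   [2755917531959768871054720985560416168,
    8050803598141701827129991727862151535,
    -426773533277014984677044721151285131,
    -1258104247242579003160409589384645554,
    86585846747276815154968809548479309,
    257099248334203537542697475992394382,
    -24021232017558265764475873515946053,
    -71587120437114199816049791344982550,
    9664146180157529076278100680296920,
    28707439413111998450790959542797340,
    -6135274730090152833112097128033302,
    -17927344638970888182574991988428573,
    6983984959062519151872808361337735,
    19583058090422276652457799306449998,
    -17647247954357587574051141827234091,
    -45245738545986684944501321672537553,
    174689826302729528535980148883374690,
    1066666666666666666666666666666666667,
    2600000000000000000000000000000000000]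
    2610684090229051024025083772626247194956664
    2610684090229051024025083772626252416324845 _ _ (by decide +kernel)

/-! ### The final interval computation -/

theorem sq_term_bounds {x y z f xl xu yl yu zl zu fl fu : ℝ} (hx : xl ≤ x ∧ x ≤ xu)
    (hy : yl ≤ y ∧ y ≤ yu) (hz : zl ≤ z ∧ z ≤ zu) (hf : fl ≤ f ∧ f ≤ fu)
    (x0 : 0 < xl) (y0 : 0 < yl) (z0 : 0 < zl) (f0 : 0 < fl) :
    (xl * yl / zu) ^ 2 * fl ≤ (x * y / z) ^ 2 * f ∧
      (x * y / z) ^ 2 * f ≤ (xu * yu / zl) ^ 2 * fu := by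
  obtain ⟨hx1, hx2⟩ := hx
  obtain ⟨hy1, hy2⟩ := hy
  obtain ⟨hz1, hz2⟩ := hz
  obtain ⟨hf1, hf2⟩ := hf
  have hx0 := x0.trans_le hx1
  have hy0 := y0.trans_le hy1
  have hz0 := z0.trans_le hz1
  have hf0 := f0.trans_le hf1
  have hxu := hx0.le.trans hx2
  have hyu := hy0.le.trans hy2
  have hzu := hz0.le.trans hz2
  constructor <;> gcongr

theorem f13_eq : f13 = 2 * 13 ^ 6 * ∑ h ∈ ({1, 2, 3, 5, 6, 9} : Finset ℕ),
      (Real.Gamma (((13 - (3 * h) % 13 : ℕ) : ℝ) / 13) *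
          Real.Gamma (((13 - (9 * h) % 13 : ℕ) : ℝ) / 13) /
          Real.Gamma ((((3 * h) % 13 : ℕ) : ℝ) / 13)) ^ 2 *
        F32 ((h : ℝ) / 13) ((h : ℝ) / 13) ((((9 * h) % 13 : ℕ) : ℝ) / 13) 1 1 := by
  unfold f13
  congr 2

/-- The case `k = 5`, to one decimal place. -/
theorem f13_bounds :
    (6559580430989766116014661811 : ℝ) + 0.7 < 120 * 13 ^ 16 * f13 ∧
      120 * 13 ^ 16 * f13 < (6559580430989766116014661811 : ℝ) + 0.71 := by
  have t1 := sq_term_bounds gamma_10 gamma_4 gamma_3 F32_1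
    (by norm_num) (by norm_num) (by norm_num) (by norm_num)
  have t2 := sq_term_bounds gamma_7 gamma_8 gamma_6 F32_2
    (by norm_num) (by norm_num) (by norm_num) (by norm_num)
  have t3 := sq_term_bounds gamma_4 gamma_12 gamma_9 F32_3
    (by norm_num) (by norm_num) (by norm_num) (by norm_num)
  have t5 := sq_term_bounds gamma_11 gamma_7 gamma_2 F32_5
    (by norm_num) (by norm_num) (by norm_num) (by norm_num)
  have t6 := sq_term_bounds gamma_8 gamma_11 gamma_5 F32_6
    (by norm_num) (by norm_num) (by norm_num) (by norm_num)
  have t9 := sq_term_bounds gamma_12 gamma_10 gamma_1 F32_9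
    (by norm_num) (by norm_num) (by norm_num) (by norm_num)
  rw [f13_eq, Finset.sum_insert (by decide), Finset.sum_insert (by decide),
    Finset.sum_insert (by decide), Finset.sum_insert (by decide),
    Finset.sum_insert (by decide), Finset.sum_singleton]
  constructor
  · refine lt_of_lt_of_le ?_ (mul_le_mul_of_nonneg_left (mul_le_mul_of_nonneg_left
      (add_le_add t1.1 (add_le_add t2.1 (add_le_add t3.1 (add_le_add t5.1
        (add_le_add t6.1 t9.1))))) (by norm_num)) (by norm_num))
    norm_num
  · refine lt_of_le_of_lt (mul_le_mul_of_nonneg_left (mul_le_mul_of_nonneg_left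
      (add_le_add t1.2 (add_le_add t2.2 (add_le_add t3.2 (add_le_add t5.2
        (add_le_add t6.2 t9.2))))) (by norm_num)) (by norm_num)) ?_
    norm_num

/-- For every integer k with 1 ≤ k ≤ 5, the real number k!·13^{4k−4}·f(13) (the value
f(13,k) of the paper) is not an integer. -/
theorem stmt_14 (k : ℕ) (hk1 : 1 ≤ k) (hk2 : k ≤ 5) :
    ¬ ∃ z : ℤ, (z : ℝ) = (k.factorial : ℝ) * 13 ^ (4 * k - 4) * f13 := by
  rintro ⟨z, hz⟩
  -- `k! * 13 ^ (4 k - 4)` divides `5! * 13 ^ 16`, so all cases reduce to `k = 5`.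
  obtain ⟨c, hc⟩ : k.factorial * 13 ^ (4 * k - 4) ∣ 120 * 13 ^ 16 :=
    mul_dvd_mul (Nat.factorial_dvd_factorial hk2) (pow_dvd_pow 13 (by omega))
  have hc' : (120 * 13 ^ 16 : ℝ) = (k.factorial : ℝ) * 13 ^ (4 * k - 4) * c := by
    exact_mod_cast hc
  have key : ((z * c : ℤ) : ℝ) = 120 * 13 ^ 16 * f13 := by
    rw [hc']; push_cast; rw [hz]; ring
  obtain ⟨h1, h2⟩ := f13_bounds
  rw [← key] at h1 h2
  have h3 : (6559580430989766116014661811 : ℤ) < z * c := by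
    have : ((6559580430989766116014661811 : ℤ) : ℝ) < ((z * c : ℤ) : ℝ) := by
      push_cast at h1 ⊢; linarith
    exact_mod_cast this
  have h4 : z * c < (6559580430989766116014661812 : ℤ) := by
    have : ((z * c : ℤ) : ℝ) < ((6559580430989766116014661812 : ℤ) : ℝ) := by
      push_cast at h2 ⊢; linarith
    exact_mod_cast this
  omega
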